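/- arXiv:2306.17382 — 2 statements merged into one kernel-verified Lean document; each statement's English description precedes it below -/
import Mathlib

section
/- Let L be a field, σ a field automorphism of L, n ≥ 1, and V a 2n-dimensional L-vector space equipped with an alternating bilinear form ⟨·,·⟩. Let c ∈ L \ {0} and let F : V → V be an additive bijection which is σ-semilinear (F(a·v) = σ(a)·F(v) for all a ∈ L, v ∈ V) and satisfies ⟨F(x),F(y)⟩ = c·σ(⟨x,y⟩) for all x,y ∈ V. If v ∈ V satisfies ⟨v,F^i(v)⟩ = 0 for all 1 ≤ i ≤ n−1 and ⟨v,F^n(v)⟩ ≠ 0, then the 2n vectors v, F(v), F²(v), …, F^{2n−1}(v) form an L-basis of V. -/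
noncomputable section

/-- **Basis lemma.** Let `L` be a field, `σ` a field automorphism of `L`, `n ≥ 1`, and `V` a
`2n`-dimensional `L`-vector space equipped with an alternating bilinear form `B`. Let `c ∈ L∖{0}`
and let `F : V → V` be an additive bijection which is `σ`-semilinear and satisfies
`B (F x) (F y) = c · σ (B x y)` for all `x, y`. If `v` satisfies `B v (F^i v) = 0` for
`1 ≤ i ≤ n − 1` and `B v (F^n v) ≠ 0`, then `v, F(v), …, F^{2n−1}(v)` form an `L`-basis of `V`. -/
theorem semilinear_iterates_form_basis
    (L : Type*) [Field L] (σ : L ≃+* L)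
    (n : ℕ) (hn : 1 ≤ n)
    (V : Type*) [AddCommGroup V] [Module L V]
    (hdim : Module.finrank L V = 2 * n)
    (B : V →ₗ[L] V →ₗ[L] L) (halt : ∀ x : V, B x x = 0)
    (c : L) (hc : c ≠ 0)
    (F : V → V) (hFbij : Function.Bijective F)
    (hFadd : ∀ x y : V, F (x + y) = F x + F y)
    (hFsemi : ∀ (a : L) (x : V), F (a • x) = σ a • F x)
    (hFB : ∀ x y : V, B (F x) (F y) = c * σ (B x y))
    (v : V)
    (hv1 : ∀ i : ℕ, 1 ≤ i → i ≤ n - 1 → B v (F^[i] v) = 0)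
    (hv2 : B v (F^[n] v) ≠ 0) :
    LinearIndependent L (fun i : Fin (2 * n) => F^[(i : ℕ)] v) ∧
      Submodule.span L (Set.range fun i : Fin (2 * n) => F^[(i : ℕ)] v) = ⊤ := by
  have hiff : ∀ i d : ℕ, B (F^[i] v) (F^[i + d] v) = 0 ↔ B v (F^[d] v) = 0 := by
    intro i d
    induction i with
    | zero => simp
    | succ i ih =>
      rw [show i + 1 + d = (i + d) + 1 by omega, Function.iterate_succ_apply',
        Function.iterate_succ_apply', hFB, ← ih]
      simp [hc]
  have hskew : ∀ x y : V, B x y = 0 → B y x = 0 := by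
    intro x y h
    have h1 := halt (x + y)
    simpa [halt, h] using h1
  have hz : ∀ i d : ℕ, d < n → B (F^[i] v) (F^[i + d] v) = 0 := by
    intro i d hd
    rw [hiff]
    rcases Nat.eq_zero_or_pos d with rfl | h
    · simpa using halt v
    · exact hv1 d h (by omega)
  have hz2 : ∀ i j : ℕ, i < j + n → j < i + n → B (F^[i] v) (F^[j] v) = 0 := by
    intro i j h1 h2
    rcases le_total i j with h | h
    · obtain ⟨d, rfl⟩ := Nat.exists_eq_add_of_le h
      exact hz i d (by omega)
    · obtain ⟨d, rfl⟩ := Nat.exists_eq_add_of_le h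
      exact hskew _ _ (hz j d (by omega))
  have hnz : ∀ i : ℕ, B (F^[i] v) (F^[i + n] v) ≠ 0 := fun i h => hv2 ((hiff i n).1 h)
  have hli : LinearIndependent L (fun i : Fin (2 * n) => F^[(i : ℕ)] v) := by
    rw [Fintype.linearIndependent_iff]
    intro a ha
    have hsum : ∀ i : ℕ, ∑ j : Fin (2 * n), a j * B (F^[i] v) (F^[(j : ℕ)] v) = 0 := by
      intro i
      have h := congrArg (B (F^[i] v)) ha
      simpa [map_sum] using h
    have hlow : ∀ k : ℕ, ∀ h : k < n, a ⟨k, by omega⟩ = 0 := by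
      intro k
      induction k using Nat.strong_induction_on with
      | _ k ih =>
        intro h
        have hs := hsum (k + n)
        rw [Finset.sum_eq_single (⟨k, by omega⟩ : Fin (2 * n))] at hs
        · rcases mul_eq_zero.1 hs with h0 | h0
          · exact h0
          · exact absurd (hskew _ _ h0) (hnz k)
        · rintro ⟨j, hj⟩ - hne
          have hne' : j ≠ k := fun e => hne (Fin.ext e)
          rcases lt_or_gt_of_ne hne' with hl | hl
          · rw [ih j hl (by omega), zero_mul]
          · rw [hz2 (k + n) j (by omega) (by omega), mul_zero]
        · simp
    have hhigh : ∀ m k : ℕ, ∀ h : k < n, n - 1 - k = m → a ⟨k + n, by omega⟩ = 0 := by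
      intro m
      induction m using Nat.strong_induction_on with
      | _ m ih =>
        intro k h hm
        have hs := hsum k
        rw [Finset.sum_eq_single (⟨k + n, by omega⟩ : Fin (2 * n))] at hs
        · exact (mul_eq_zero.1 hs).resolve_right (hnz k)
        · rintro ⟨j, hj⟩ - hne
          have hne' : j ≠ k + n := fun e => hne (Fin.ext e)
          rcases lt_or_gt_of_ne hne' with hl | hl
          · rw [hz2 k j (by omega) (by omega), mul_zero]
          · obtain ⟨d, rfl⟩ := Nat.exists_eq_add_of_le' (show n ≤ j by omega)
            rw [ih (n - 1 - d) (by omega) d (by omega) rfl, zero_mul]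
        · simp
    rintro ⟨j, hj⟩
    rcases lt_or_ge j n with h | h
    · exact hlow j h
    · obtain ⟨d, rfl⟩ := Nat.exists_eq_add_of_le' h
      exact hhigh _ d (by omega) rfl
  refine ⟨hli, ?_⟩
  have : FiniteDimensional L V := FiniteDimensional.of_finrank_pos (by omega)
  exact hli.span_eq_top_of_card_eq_finrank' (by simp [hdim])
end
end

section
/- Let 𝔽 be an algebraic closure of 𝔽_q, where q is a power of a prime p; for t ∈ 𝔽 write t^{1/q} for the unique q-th root of t in 𝔽. Let x, w ∈ 𝔽 satisfy x·w^{q²} − w·x^{q²} ≠ 0. Then the map (y,z) ↦ x^{1/q}·z − w^{1/q}·y is a bijection from the set {(y,z) ∈ 𝔽² : x·z^q − y·w^q + z·x^q − w·y^q = 0} onto 𝔽. -/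
noncomputable section
open scoped Classical

namespace ToyGSp4

/-- The algebraic closure `𝔽` of `𝔽_p` (hence of `𝔽_q` for any `q = p ^ s`). -/
abbrev FF (p : ℕ) [Fact p.Prime] : Type := AlgebraicClosure (ZMod p)

variable (p : ℕ) [Fact p.Prime] (s : ℕ)

/-- `q = p ^ s`. -/
def Q : ℕ := p ^ s

/-- `t^{1/q}`, the unique `q`-th root of `t` in `𝔽` (which exists and is unique since `𝔽` is
perfect of characteristic `p`). -/
def rootQ (t : FF p) : FF p := Function.invFun (fun a : FF p => a ^ Q p s) t

/-- **Key computation of the introduction (case `G = GSp₄`).** If `x·w^{q²} − w·x^{q²} ≠ 0`,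
then `(y, z) ↦ x^{1/q}·z − w^{1/q}·y` is a bijection from
`{(y, z) : x·z^q − y·w^q + z·x^q − w·y^q = 0}` onto `𝔽`. -/
theorem toy_hypersurface_bijection
    (hs : 0 < s) (x w : FF p)
    (hxw : x * w ^ (Q p s ^ 2) - w * x ^ (Q p s ^ 2) ≠ 0) :
    Set.BijOn (fun yz : FF p × FF p => rootQ p s x * yz.2 - rootQ p s w * yz.1)
      {yz : FF p × FF p |
        x * yz.2 ^ Q p s - yz.1 * w ^ Q p s + yz.2 * x ^ Q p s - w * yz.1 ^ Q p s = 0}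
      Set.univ := by
  have root : ∀ t : FF p, rootQ p s t ^ Q p s = t := by
    intro t
    have hpos : 0 < Q p s := pow_pos (Fact.out : p.Prime).pos s
    obtain ⟨r, hr⟩ := IsAlgClosed.exists_pow_nat_eq t hpos
    exact Function.invFun_eq (f := fun a : FF p => a ^ Q p s) ⟨r, hr⟩
  have fsub : ∀ u v : FF p, (u - v) ^ Q p s = u ^ Q p s - v ^ Q p s := by
    intro u v
    exact sub_pow_char_pow u v s (p := p)
  have ha := root x
  have hb := root w
  generalize rootQ p s x = a at *
  generalize rootQ p s w = b at *
  have hD : b * x ^ Q p s - a * w ^ Q p s ≠ 0 := by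
    intro h
    apply hxw
    have h2 : (b * x ^ Q p s - a * w ^ Q p s) ^ Q p s = 0 := by
      rw [h]
      exact zero_pow (pow_pos (Fact.out : p.Prime).pos s).ne'
    rw [fsub, mul_pow, mul_pow, ha, hb, ← pow_mul, ← pow_mul, ← pow_two] at h2
    linear_combination -h2
  have key : ∀ y z : FF p, (a * z - b * y) ^ Q p s = x * z ^ Q p s - w * y ^ Q p s := by
    intro y z
    rw [fsub, mul_pow, mul_pow, ha, hb]
  refine ⟨fun _ _ => Set.mem_univ _, ?_, ?_⟩
  · rintro ⟨y, z⟩ h ⟨y', z'⟩ h' e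
    simp only [Set.mem_setOf_eq] at h h' e
    have k := key y z
    have k' := key y' z'
    rw [e] at k
    have e2 : x ^ Q p s * (z - z') - w ^ Q p s * (y - y') = 0 := by
      linear_combination h - h' + k - k'
    refine Prod.ext (mul_left_cancel₀ hD ?_) (mul_left_cancel₀ hD ?_)
    · change _ * y = _ * y'
      linear_combination a * e2 - x ^ Q p s * e
    · change _ * z = _ * z'
      linear_combination b * e2 - w ^ Q p s * e
  · intro t _
    have e1 : a * ((-t * w ^ Q p s - b * t ^ Q p s) / (b * x ^ Q p s - a * w ^ Q p s))
        - b * ((-a * t ^ Q p s - t * x ^ Q p s) / (b * x ^ Q p s - a * w ^ Q p s)) = t := by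
      rw [← mul_div_assoc, ← mul_div_assoc, ← sub_div, div_eq_iff hD]
      ring
    have e2 : x ^ Q p s * ((-t * w ^ Q p s - b * t ^ Q p s) / (b * x ^ Q p s - a * w ^ Q p s))
        - w ^ Q p s * ((-a * t ^ Q p s - t * x ^ Q p s) / (b * x ^ Q p s - a * w ^ Q p s))
        = - t ^ Q p s := by
      rw [← mul_div_assoc, ← mul_div_assoc, ← sub_div, div_eq_iff hD]
      ring
    generalize (-t * w ^ Q p s - b * t ^ Q p s) / (b * x ^ Q p s - a * w ^ Q p s) = z at e1 e2
    generalize (-a * t ^ Q p s - t * x ^ Q p s) / (b * x ^ Q p s - a * w ^ Q p s) = y at e1 e2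
    refine ⟨(y, z), ?_, e1⟩
    have k := key y z
    rw [e1] at k
    simp only [Set.mem_setOf_eq]
    linear_combination e2 - k

end ToyGSp4
end
end
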